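/- arXiv:2401.00531 — 2 statements merged into one kernel-verified Lean document; each statement's English description precedes it below -/
import Mathlib

section
/- Let p be a prime and G a group that is pseudo finite at p. Let σ = (R_0 < R_1 < ... < R_m) with m ≥ 1 be a strictly increasing chain of nontrivial finite p-subgroups of G, let Q be a Sylow p-subgroup of N_G(σ), and suppose 1 ≤ i ≤ m satisfies R_i = Q R_{i-1}. Let τ be the chain obtained from σ by deleting R_i. Then Q is a Sylow p-subgroup of N_G(τ). -/
open scoped Pointwise

/-- The conjugate subgroup `g⁻¹ P g`. -/
def conjSub {G : Type*} [Group G] (g : G) (P : Subgroup G) : Subgroup G :=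
  P.map (MulAut.conj g⁻¹).toMonoidHom

/-- `S` is a Sylow `p`-subgroup of the (possibly infinite) group `G`:
a finite `p`-subgroup such that every finite `p`-subgroup of `G` is conjugate
in `G` to a subgroup of `S`. -/
def IsSylow (p : ℕ) {G : Type*} [Group G] (S : Subgroup G) : Prop :=
  Finite S ∧ IsPGroup p S ∧
    ∀ Q : Subgroup G, Finite Q → IsPGroup p Q → ∃ g : G, conjSub g Q ≤ S

/-- `S` is a Sylow `p`-subgroup of the subgroup `N` of `G`:
`S` is a finite `p`-subgroup contained in `N` such that every finite `p`-subgroup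
of `G` contained in `N` is conjugate by an element of `N` to a subgroup of `S`. -/
def IsSylowIn (p : ℕ) {G : Type*} [Group G] (N S : Subgroup G) : Prop :=
  S ≤ N ∧ Finite S ∧ IsPGroup p S ∧
    ∀ Q : Subgroup G, Q ≤ N → Finite Q → IsPGroup p Q → ∃ g ∈ N, conjSub g Q ≤ S

/-- The normalizer of a chain of subgroups: the intersection of the normalizers
of the members of the chain. -/
def chainNorm {G : Type*} [Group G] {n : ℕ} (γ : Fin (n + 1) → Subgroup G) : Subgroup G :=
  ⨅ i, Subgroup.normalizer (γ i : Set G)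

/-- `G` is pseudo finite at `p` if for every chain of finite `p`-subgroups of `G`
(the trivial subgroup allowed in the chain), the normalizer of the chain has a
Sylow `p`-subgroup. -/
def PseudoFiniteAt (p : ℕ) (G : Type*) [Group G] : Prop :=
  ∀ (n : ℕ) (γ : Fin (n + 1) → Subgroup G), Monotone γ →
    (∀ i, Finite (γ i)) → (∀ i, IsPGroup p (γ i)) →
      ∃ S : Subgroup G, IsSylowIn p (chainNorm γ) S

/-- The member of the chain preceding position `i`, with the convention that the
member preceding position `0` is the trivial subgroup. -/
def chainPrev {G : Type*} [Group G] {n : ℕ} (γ : Fin (n + 1) → Subgroup G)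
    (i : Fin (n + 1)) : Subgroup G :=
  match i with
  | ⟨0, _⟩ => ⊥
  | ⟨j + 1, h⟩ => γ ⟨j, by omega⟩

/-- A strictly increasing chain `γ = (P_0 < ⋯ < P_n)` of nontrivial finite
`p`-subgroups is redundant if for every Sylow `p`-subgroup `Q` of `N_G(γ)` and
every `0 ≤ i ≤ n`, `P_i ≠ Q·P_{i-1}` (with `P_{-1} = 1`). -/
def IsRedundant (p : ℕ) {G : Type*} [Group G] {n : ℕ} (γ : Fin (n + 1) → Subgroup G) : Prop :=
  ∀ Q : Subgroup G, IsSylowIn p (chainNorm γ) Q →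
    ∀ i : Fin (n + 1), (γ i : Set G) ≠ (Q : Set G) * (chainPrev γ i : Set G)

/-- The chain obtained from `γ` by inserting the subgroup `H` immediately after
position `i`. -/
def insertChain {G : Type*} [Group G] {n : ℕ} (γ : Fin (n + 1) → Subgroup G)
    (i : Fin (n + 1)) (H : Subgroup G) : Fin (n + 2) → Subgroup G :=
  fun j =>
    if h : (j : ℕ) ≤ (i : ℕ) then γ ⟨j, by have := i.isLt; omega⟩
    else if h2 : (j : ℕ) = (i : ℕ) + 1 then H
    else γ ⟨(j : ℕ) - 1, by have := j.isLt; omega⟩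

/-- The chain obtained from `σ` by deleting the member at position `i`. -/
def deleteChain {G : Type*} [Group G] {n : ℕ} (σ : Fin (n + 2) → Subgroup G)
    (i : Fin (n + 2)) : Fin (n + 1) → Subgroup G :=
  fun j =>
    if h : (j : ℕ) < (i : ℕ) then σ ⟨j, by have := j.isLt; omega⟩
    else σ ⟨(j : ℕ) + 1, by have := j.isLt; omega⟩


lemma aux_conj_mem {G : Type*} [Group G] (Q R S : Subgroup G)
    (hprod : (S : Set G) = (Q : Set G) * (R : Set G)) (x : G)
    (hQ : x ∈ Subgroup.normalizer (Q : Set G)) (hR : x ∈ Subgroup.normalizer (R : Set G))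
    (h : G) (hh : h ∈ S) : x * h * x⁻¹ ∈ S := by
  have h1 : h ∈ (Q : Set G) * (R : Set G) := by rw [← hprod]; exact hh
  obtain ⟨q, hq, r, hr, rfl⟩ := Set.mem_mul.1 h1
  have : x * (q * r) * x⁻¹ ∈ (S : Set G) := by
    rw [hprod]
    exact Set.mem_mul.2 ⟨x * q * x⁻¹, (Subgroup.mem_normalizer_iff.1 hQ q).1 hq,
      x * r * x⁻¹, (Subgroup.mem_normalizer_iff.1 hR r).1 hr, by group⟩
  exact this

lemma aux_norm {G : Type*} [Group G] (Q R S : Subgroup G)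
    (hprod : (S : Set G) = (Q : Set G) * (R : Set G)) (x : G)
    (hQ : x ∈ Subgroup.normalizer (Q : Set G)) (hR : x ∈ Subgroup.normalizer (R : Set G)) :
    x ∈ Subgroup.normalizer (S : Set G) := by
  rw [Subgroup.mem_normalizer_iff]
  intro h
  refine ⟨aux_conj_mem Q R S hprod x hQ hR h, fun hh => ?_⟩
  have := aux_conj_mem Q R S hprod x⁻¹ (inv_mem hQ) (inv_mem hR) _ hh
  simpa [mul_assoc] using this

lemma aux_conjSub_le {G : Type*} [Group G] (g : G) (P S : Subgroup G) :
    conjSub g P ≤ S ↔ ∀ x ∈ P, g⁻¹ * x * g ∈ S := by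
  unfold conjSub
  rw [Subgroup.map_le_iff_le_comap]
  constructor
  · intro h x hx
    simpa using h hx
  · intro h x hx
    simpa using h x hx

lemma aux_mem_conjSub {G : Type*} [Group G] (g : G) (P : Subgroup G) (x : G) :
    x ∈ conjSub g P ↔ g * x * g⁻¹ ∈ P := by
  unfold conjSub
  rw [Subgroup.mem_map]
  constructor
  · rintro ⟨y, hy, rfl⟩
    simpa [mul_assoc] using hy
  · intro h
    exact ⟨_, h, by simp [mul_assoc]⟩

lemma aux_delete {G : Type*} [Group G] {n : ℕ} (σ : Fin (n + 2) → Subgroup G)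
    (i j : Fin (n + 2)) (hij : j ≠ i) : ∃ k, deleteChain σ i k = σ j := by
  have hv : (j : ℕ) ≠ i := fun h => hij (Fin.ext h)
  have := i.isLt
  have := j.isLt
  by_cases h : (j : ℕ) < i
  · exact ⟨⟨j, by omega⟩, by simp [deleteChain, h]⟩
  · refine ⟨⟨j - 1, by omega⟩, ?_⟩
    have h2 : ¬ ((j : ℕ) - 1 < i) := by omega
    simp only [deleteChain, h2, dite_false]
    congr 1
    ext
    simp only
    omega

lemma aux_delete_spec {G : Type*} [Group G] {n : ℕ} (σ : Fin (n + 2) → Subgroup G)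
    (i : Fin (n + 2)) : ∃ f : Fin (n + 1) → Fin (n + 2), Monotone f ∧
      ∀ k, deleteChain σ i k = σ (f k) := by
  refine ⟨fun k => if (k : ℕ) < i then ⟨k, by omega⟩ else ⟨k + 1, by omega⟩, ?_, ?_⟩
  · intro a b hab
    have : (a : ℕ) ≤ b := hab
    simp only [Fin.le_def]
    split_ifs <;> simp only <;> omega
  · intro k
    simp only [deleteChain]
    split_ifs <;> rfl

/-- In a group pseudo finite at `p`, if `σ = (R_0 < ⋯ < R_m)` with `m ≥ 1` is a
strictly increasing chain of nontrivial finite `p`-subgroups, `Q` is a Sylow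
`p`-subgroup of `N_G(σ)`, and `1 ≤ i ≤ m` satisfies `R_i = Q·R_{i-1}`, then `Q`
is a Sylow `p`-subgroup of the normalizer of the chain obtained by deleting
`R_i`. -/
theorem sylow_of_deleted_chain (p : ℕ) (hp : p.Prime) {G : Type*} [Group G]
    (hG : PseudoFiniteAt p G) {n : ℕ}
    (σ : Fin (n + 2) → Subgroup G) (hmono : StrictMono σ)
    (hnt : ∀ i, σ i ≠ ⊥) (hfin : ∀ i, Finite (σ i)) (hpg : ∀ i, IsPGroup p (σ i))
    (Q : Subgroup G) (hQ : IsSylowIn p (chainNorm σ) Q)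
    (i : Fin (n + 2)) (hi : (i : ℕ) ≠ 0)
    (hprod : (σ i : Set G) = (Q : Set G) * (chainPrev σ i : Set G)) :
    IsSylowIn p (chainNorm (deleteChain σ i)) Q := by
  obtain ⟨hQN, hQf, hQp, hQS⟩ := hQ
  have : Fact p.Prime := ⟨hp⟩
  obtain ⟨f, hfm, hf⟩ := aux_delete_spec σ i
  have hle : chainNorm σ ≤ chainNorm (deleteChain σ i) := by
    refine le_iInf fun k => ?_
    rw [hf k]
    exact iInf_le _ (f k)
  have hprev : ∃ j, j ≠ i ∧ chainPrev σ i = σ j := by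
    obtain ⟨v, hv⟩ := i
    cases v with
    | zero => exact absurd rfl hi
    | succ v => exact ⟨⟨v, by omega⟩, by simp, rfl⟩
  obtain ⟨j, hji, hj⟩ := hprev
  rw [hj] at hprod
  have hdel : ∀ x ∈ chainNorm (deleteChain σ i), ∀ k, k ≠ i →
      x ∈ Subgroup.normalizer (σ k : Set G) := by
    intro x hx k hk
    obtain ⟨l, hl⟩ := aux_delete σ i k hk
    rw [← hl]
    exact (iInf_le (fun l => Subgroup.normalizer (deleteChain σ i l : Set G)) l) hx
  obtain ⟨S, hSN, hSf, hSp, hSS⟩ := hG n (deleteChain σ i)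
    (fun a b hab => by rw [hf, hf]; exact hmono.monotone (hfm hab))
    (fun k => by rw [hf]; exact hfin _) (fun k => by rw [hf]; exact hpg _)
  obtain ⟨g, hgN, hg⟩ := hSS Q (hQN.trans hle) hQf hQp
  rw [aux_conjSub_le] at hg
  set T := conjSub g⁻¹ S with hT
  have hmT : ∀ x, x ∈ T ↔ g⁻¹ * x * g ∈ S := fun x => by
    rw [hT, aux_mem_conjSub, inv_inv]
  have hQT : Q ≤ T := fun x hx => (hmT x).2 (hg x hx)
  have hTN : T ≤ chainNorm (deleteChain σ i) := fun x hx => by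
    have h1 := mul_mem (mul_mem hgN (hSN ((hmT x).1 hx))) (inv_mem hgN)
    simpa [mul_assoc] using h1
  have hTp : IsPGroup p T := hSp.map _
  have hTf : Finite T := Set.Finite.to_subtype (Set.Finite.image _ (Set.toFinite (S : Set G)))
  have hTQ : T ≤ Q := by
    by_contra hne
    have hlt : Q.subgroupOf T < ⊤ := by
      rw [lt_top_iff_ne_top, Ne, Subgroup.subgroupOf_eq_top]
      exact hne
    have := hTp.isNilpotent
    have hnl := Group.normalizerCondition_of_isNilpotent (G := T) _ hlt
    set M := Subgroup.normalizer (Q.subgroupOf T : Set T) with hM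
    set P := M.map T.subtype with hP
    have hPT : P ≤ T := Subgroup.map_subtype_le M
    have hPf : Finite P := Set.Finite.to_subtype (Set.Finite.image _ (Set.toFinite (M : Set T)))
    have hPp : IsPGroup p P := hTp.to_le hPT
    have hQP : Q < P := by
      have h1 : (Q.subgroupOf T).map T.subtype < M.map T.subtype :=
        (Subgroup.map_lt_map_iff_of_injective T.subtype_injective).2 hnl
      rwa [Subgroup.map_subgroupOf_eq_of_le hQT] at h1
    have hPQ : ∀ x ∈ P, x ∈ Subgroup.normalizer (Q : Set G) := by
      rintro _ ⟨⟨x, hxT⟩, hx, rfl⟩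
      rw [Subgroup.mem_normalizer_iff]
      have hx' := Subgroup.mem_normalizer_iff.1 hx
      intro h
      constructor
      · intro hh
        exact (hx' ⟨h, hQT hh⟩).1 hh
      · intro hh
        have hhT : h ∈ T := by
          have h1 := mul_mem (mul_mem (inv_mem hxT) (hQT hh)) hxT
          simpa [mul_assoc] using h1
        exact (hx' ⟨h, hhT⟩).2 hh
    have hPN : P ≤ chainNorm σ := by
      refine le_iInf fun k x hx => ?_
      by_cases hk : k = i
      · subst hk
        exact aux_norm Q (σ j) _ hprod x (hPQ x hx) (hdel x (hTN (hPT hx)) j hji)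
      · exact hdel x (hTN (hPT hx)) k hk
    obtain ⟨c, -, hc⟩ := hQS P hPN hPf hPp
    have hcard : Nat.card (conjSub c P) = Nat.card P :=
      Subgroup.card_map_of_injective (MulAut.conj c⁻¹).injective
    have h1 : Nat.card P ≤ Nat.card Q := hcard ▸ Subgroup.card_le_of_le hc
    exact hQP.ne (Subgroup.eq_of_le_of_card_ge hQP.le h1)
  refine ⟨hQN.trans hle, hQf, hQp, fun P hPN hPf hPp => ?_⟩
  obtain ⟨h, hhN, hh⟩ := hSS P hPN hPf hPp
  rw [aux_conjSub_le] at hh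
  refine ⟨h * g⁻¹, mul_mem hhN (inv_mem hgN), ?_⟩
  rw [aux_conjSub_le]
  intro x hx
  apply hTQ
  rw [hmT]
  simpa [mul_assoc] using hh x hx
end

section
/- Let p be a prime and G a group. Let τ = (P_0 < ... < P_n) and τ' = (P'_0 < ... < P'_n) be redundant chains of nontrivial finite p-subgroups of G, let Q be a Sylow p-subgroup of N_G(τ) and Q' a Sylow p-subgroup of N_G(τ'), let i be the maximal index with Q not contained in P_i and i' the maximal index with Q' not contained in P'_{i'}. Let σ be the chain obtained from τ by inserting QP_i immediately after P_i, and σ' the chain obtained from τ' by inserting Q'P'_{i'} immediately after P'_{i'}. If there exists g ∈ G with g⁻¹σg = σ' (componentwise), then i = i' and there exists h ∈ G with h⁻¹τh = τ' (componentwise). -/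
open scoped Pointwise

theorem mem_conjSub' {G : Type*} [Group G] (g x : G) (P : Subgroup G) :
    x ∈ conjSub g P ↔ g * x * g⁻¹ ∈ P := by
  unfold conjSub
  rw [Subgroup.mem_map]
  constructor
  · rintro ⟨y, hy, rfl⟩
    simpa [mul_assoc] using hy
  · intro h
    exact ⟨_, h, by simp [mul_assoc]⟩

theorem finite_sup' {G : Type*} [Group G] (H K : Subgroup G) (hH : Finite H) (hK : Finite K)
    (h : H ≤ Subgroup.normalizer (K : Set G)) : Finite (H ⊔ K : Subgroup G) := by
  have e : ((H ⊔ K : Subgroup G) : Set G) = (H : Set G) * (K : Set G) :=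
    Subgroup.coe_mul_of_left_le_normalizer_right H K h
  have : ((H ⊔ K : Subgroup G) : Set G).Finite := by
    rw [e]
    exact Set.Finite.mul (Set.toFinite _) (Set.toFinite _)
  exact this.to_subtype

theorem sylow_max' {p : ℕ} {G : Type*} [Group G] {N Q M : Subgroup G}
    (hQ : IsSylowIn p N Q) (hQM : Q ≤ M) (hM : M ≤ N) (hf : Finite M) (hp : IsPGroup p M) :
    M = Q := by
  obtain ⟨_, hQf, _, h⟩ := hQ
  obtain ⟨g, _, hg⟩ := h M hM hf hp
  have h1 : Nat.card (conjSub g M) = Nat.card M :=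
    Subgroup.card_map_of_injective (MulAut.conj g⁻¹).injective
  have h2 := Subgroup.card_le_of_le hg
  exact (Subgroup.eq_of_le_of_card_ge hQM (by omega)).symm

theorem sylow_top' {p : ℕ} [Fact p.Prime] {G : Type*} [Group G] {N Q P R : Subgroup G}
    (hQ : IsSylowIn p N Q) (hN : N ≤ Subgroup.normalizer (P : Set G))
    (hPf : Finite P) (hPp : IsPGroup p P) (hR : R ≤ N)
    (hRK : R ≤ Subgroup.normalizer ((Q ⊔ P : Subgroup G) : Set G))
    (hRf : Finite R) (hRp : IsPGroup p R) : R ≤ Q := by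
  have hQP := hQ.1.trans hN
  have hKf : Finite (Q ⊔ P : Subgroup G) := finite_sup' Q P hQ.2.1 hPf hQP
  have hKp : IsPGroup p (Q ⊔ P : Subgroup G) := IsPGroup.to_sup_of_normal_right' hQ.2.2.1 hPp hQP
  have hM : (Q ⊔ P) ⊓ N = Q := by
    refine sylow_max' hQ (le_inf le_sup_left hQ.1) inf_le_right ?_ (hKp.to_le inf_le_left)
    exact Finite.of_injective _ (Subgroup.inclusion_injective (inf_le_left : (Q ⊔ P) ⊓ N ≤ _))
  have hRQ : R ≤ Subgroup.normalizer (Q : Set G) := by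
    intro r hr
    have h1 := Subgroup.mem_normalizer_iff.1 (hRK hr)
    rw [Subgroup.mem_normalizer_iff]
    intro x
    rw [← hM, Subgroup.mem_inf, Subgroup.mem_inf, h1 x]
    have h2 := hR hr
    rw [N.mul_mem_cancel_right (N.inv_mem h2), N.mul_mem_cancel_left h2]
  have := sylow_max' hQ (le_sup_right : Q ≤ R ⊔ Q) (sup_le hR hQ.1)
    (finite_sup' R Q hRf hQ.2.1 hRQ) (IsPGroup.to_sup_of_normal_right' hRp hQ.2.2.1 hRQ)
  exact le_sup_left.trans this.le

theorem mem_norm_conj' {G : Type*} [Group G] (g : G) (A : Subgroup G) (x : G)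
    (h : g * x * g⁻¹ ∈ Subgroup.normalizer (A : Set G)) :
    x ∈ Subgroup.normalizer ((conjSub g A : Subgroup G) : Set G) := by
  rw [Subgroup.mem_normalizer_iff] at h ⊢
  intro y
  rw [mem_conjSub', mem_conjSub', h]
  simp [mul_assoc]

theorem insert_lo' {G : Type*} [Group G] {n : ℕ} (γ : Fin (n + 1) → Subgroup G)
    (i : Fin (n + 1)) (H : Subgroup G) (j : Fin (n + 1)) (h : j ≤ i) :
    insertChain γ i H j.castSucc = γ j := by
  have : (j : ℕ) ≤ i := h
  simp [insertChain, this]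

theorem insert_mid' {G : Type*} [Group G] {n : ℕ} (γ : Fin (n + 1) → Subgroup G)
    (i : Fin (n + 1)) (H : Subgroup G) :
    insertChain γ i H i.succ = H := by
  simp [insertChain]

theorem insert_hi' {G : Type*} [Group G] {n : ℕ} (γ : Fin (n + 1) → Subgroup G)
    (i : Fin (n + 1)) (H : Subgroup G) (j : Fin (n + 1)) (h : i < j) :
    insertChain γ i H j.succ = γ j := by
  have h1 : (i : ℕ) < j := h
  have h2 : ¬ (j : ℕ) + 1 ≤ i := by omega
  have h3 : ¬ (j : ℕ) = i := by omega
  simp [insertChain, h2, h3]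

theorem half' {p : ℕ} [Fact p.Prime] {G : Type*} [Group G] {n : ℕ}
    (τ τ' : Fin (n + 1) → Subgroup G)
    (hfin' : ∀ i, Finite (τ' i))
    (hpg' : ∀ i, IsPGroup p (τ' i))
    (Q Q' : Subgroup G) (hQ : IsSylowIn p (chainNorm τ) Q)
    (hQ' : IsSylowIn p (chainNorm τ') Q')
    (i i' : Fin (n + 1))
    (hi : ¬ Q ≤ τ i) (hmono : StrictMono τ)
    (g : G) (hg : ∀ j : Fin (n + 2),
      conjSub g (insertChain τ i (Q ⊔ τ i) j) = insertChain τ' i' (Q' ⊔ τ' i') j) :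
    i ≤ i' := by
  have hQn : ∀ j, Q ≤ Subgroup.normalizer (τ j : Set G) := fun j => hQ.1.trans (iInf_le _ j)
  have hQσ : ∀ j, Q ≤ Subgroup.normalizer (insertChain τ i (Q ⊔ τ i) j : Set G) := by
    intro j
    unfold insertChain
    split_ifs
    · exact hQn _
    · exact le_sup_left.trans Subgroup.le_normalizer
    · exact hQn _
  have hR : ∀ j, conjSub g Q ≤
      Subgroup.normalizer (insertChain τ' i' (Q' ⊔ τ' i') j : Set G) := by
    intro j x hx
    rw [← hg]
    exact mem_norm_conj' _ _ _ (hQσ j ((mem_conjSub' _ _ _).1 hx))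
  have hRQ : conjSub g Q ≤ Q' := by
    refine sylow_top' hQ' (iInf_le _ i') (hfin' i') (hpg' i') ?_ ?_ ?_ (hQ.2.2.1.map _)
    · refine le_iInf fun j => ?_
      rcases le_or_gt j i' with h | h
      · have := hR j.castSucc
        rwa [insert_lo' _ _ _ _ h] at this
      · have := hR j.succ
        rwa [insert_hi' _ _ _ _ h] at this
    · have := hR i'.succ
      rwa [insert_mid'] at this
    · have := hQ.2.1
      exact ((Set.toFinite (Q : Set G)).image _).to_subtype
  by_contra hlt
  rw [not_le] at hlt
  apply hi
  have h1 := hg i'.succ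
  rw [insert_mid'] at h1
  have h2 : insertChain τ i (Q ⊔ τ i) i'.succ ≤ τ i := by
    have h3 : (i' : ℕ) + 1 ≤ i := hlt
    simp only [insertChain, Fin.val_succ, h3, dif_pos]
    exact hmono.monotone h3
  intro x hx
  apply h2
  have h4 : g⁻¹ * x * g ∈ conjSub g Q := by
    rw [mem_conjSub']; simpa [mul_assoc] using hx
  have h5 : g⁻¹ * x * g ∈ Q' ⊔ τ' i' := (le_sup_left : Q' ≤ _) (hRQ h4)
  rw [← h1, mem_conjSub'] at h5
  simpa [mul_assoc] using h5

/-- If `τ` and `τ'` are redundant chains of nontrivial finite `p`-subgroups,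
`Q`, `Q'` are Sylow `p`-subgroups of their chain normalizers, `i`, `i'` are the
maximal indices with `Q ⊄ P_i`, `Q' ⊄ P'_{i'}`, and the chains `σ`, `σ'`
obtained by inserting `Q·P_i` after position `i`, resp. `Q'·P'_{i'}` after
position `i'`, are conjugate in `G`, then `i = i'` and `τ`, `τ'` are conjugate
in `G`. -/
theorem insert_injective (p : ℕ) (hp : p.Prime) {G : Type*} [Group G] {n : ℕ}
    (τ τ' : Fin (n + 1) → Subgroup G)
    (hmono : StrictMono τ) (hmono' : StrictMono τ')
    (hnt : ∀ i, τ i ≠ ⊥) (hnt' : ∀ i, τ' i ≠ ⊥)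
    (hfin : ∀ i, Finite (τ i)) (hfin' : ∀ i, Finite (τ' i))
    (hpg : ∀ i, IsPGroup p (τ i)) (hpg' : ∀ i, IsPGroup p (τ' i))
    (hred : IsRedundant p τ) (hred' : IsRedundant p τ')
    (Q Q' : Subgroup G) (hQ : IsSylowIn p (chainNorm τ) Q)
    (hQ' : IsSylowIn p (chainNorm τ') Q')
    (i i' : Fin (n + 1))
    (hi : ¬ Q ≤ τ i) (himax : ∀ j : Fin (n + 1), i < j → Q ≤ τ j)
    (hi' : ¬ Q' ≤ τ' i') (himax' : ∀ j : Fin (n + 1), i' < j → Q' ≤ τ' j)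
    (hconj : ∃ g : G, ∀ j : Fin (n + 2),
      conjSub g (insertChain τ i (Q ⊔ τ i) j) = insertChain τ' i' (Q' ⊔ τ' i') j) :
    i = i' ∧ ∃ h : G, ∀ j : Fin (n + 1), conjSub h (τ j) = τ' j := by
  haveI : Fact p.Prime := ⟨hp⟩
  obtain ⟨g, hg⟩ := hconj
  have e : i = i' := by
    apply le_antisymm
    · exact half' τ τ' hfin' hpg' Q Q' hQ hQ' i i' hi hmono g hg
    · refine half' τ' τ hfin hpg Q' Q hQ' hQ i' i hi' hmono' g⁻¹ ?_
      intro j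
      rw [← hg j]
      ext x
      simp [mem_conjSub', mul_assoc]
  refine ⟨e, g, fun j => ?_⟩
  subst e
  rcases le_or_gt j i with h | h
  · have := hg j.castSucc
    rwa [insert_lo' _ _ _ _ h, insert_lo' _ _ _ _ h] at this
  · have := hg j.succ
    rwa [insert_hi' _ _ _ _ h, insert_hi' _ _ _ _ h] at this
end
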